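/- Suppose the full model ω is overspecified, j ⊆ ω with p_j < p_ω, and n > p_ω + 4. If the candidate model j is overspecified, then E(R̂₁) = 0 and E(R̂₂) = 0, where R̂₁ = γ{λ̂ − (−2λ̂³ + (p_j+2)λ̂² − p_j λ̂)/n − 1} and R̂₂ = γ(−2λ̂³ + (p_j+4)λ̂² − (p_j+2))/n, and the expectation is over y ~ N_n(X(ω)β*, σ*²Σ). -/

import Mathlib

/-!
Write `Σ⁻¹ = KᵀK` and whiten: `y = X(ω)β* + σ* K⁻¹ z` with `z` standard Gaussian. When the candidate
model is overspecified, both generalized least squares residual sums of squares are `σ*²` times the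
squared norms of orthogonal projections of `z` (`residual_whitened`), so
`σ̂_ω²/σ̂_j² = ‖P_W z‖²/‖P_V z‖²`, where `W` and `V` are the orthogonal complements of the column
spaces of `K X(ω)` and `K X(j)`. They satisfy `W ≤ V`, `dim W = n - p_ω`, `dim V = n - p_j`
(`CSModel.exists_ratio`).

The vector `P_V z` is standard Gaussian on `V`, so its radius is independent of its direction, while
the ratio depends on the direction only. Hence the moments of the ratio are the quotients of the
moments of `‖P_W z‖²` by those of `‖P_V z‖²`, which are chi-square moments `d(d+2)⋯(d+2k-2)`
(`integral_ratio_pow`, proved in polar coordinates). The normalizing constants in the estimators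
`λ̂`, `λ̂²`, `λ̂³` are exactly the inverses of these quotients, so each has the same expectation as
the constant `1`, and in `R̂₁` and `R̂₂` the coefficients add up to zero.

The total mass of the density defining `M.E` plays no role: all expectations are computed up to one
common factor `C`.
-/

open Matrix MeasureTheory Real Filter Asymptotics

noncomputable section

/-- The covariate-shift linear mixed model setup of Kawakubo–Sugasawa–Kubokawa:
observed model `y ~ N_n(X(ω)β*, σ*²Σ)` with `Σ = Z G Zᵀ + R`, a candidate model
given by a subset of the columns of `X(ω)` (encoded by an embedding
`emb : Fin pj ↪ Fin pw`), and a predictive model with covariate matrices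
`X̃(ω)`, `Z̃` and error covariance matrix `R̃`. -/
structure CSModel (pw pj : ℕ) (n : ℕ) where
  q : ℕ
  m : ℕ
  /-- design matrix `X(ω)` of the full model -/
  Xw : Matrix (Fin n) (Fin pw) ℝ
  /-- the subset `j ⊆ {1,…,p_ω}` with `p_j` elements, as an embedding -/
  emb : Fin pj ↪ Fin pw
  Z : Matrix (Fin n) (Fin q) ℝ
  Gm : Matrix (Fin q) (Fin q) ℝ
  Rm : Matrix (Fin n) (Fin n) ℝ
  /-- true regression coefficients `β*` -/
  beta : Fin pw → ℝ
  /-- true variance `σ*²` -/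
  sig2 : ℝ
  /-- predictive-model covariates `X̃(ω)` -/
  Xtw : Matrix (Fin m) (Fin pw) ℝ
  Zt : Matrix (Fin m) (Fin q) ℝ
  Rt : Matrix (Fin m) (Fin m) ℝ
  hG : Gm.PosDef
  hR : Rm.PosDef
  hRt : Rt.PosDef
  hsig : 0 < sig2
  hrankw : Xw.rank = pw
  hrankj : (Xw.submatrix id ⇑emb).rank = pj

namespace CSModel

variable {pw pj n : ℕ} (M : CSModel pw pj n)

/-- `X(j)`: the columns of `X(ω)` indexed by `j`. -/
def Xj : Matrix (Fin n) (Fin pj) ℝ := M.Xw.submatrix id ⇑M.emb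

/-- `X̃(j)`: the columns of `X̃(ω)` indexed by `j`. -/
def Xtj : Matrix (Fin M.m) (Fin pj) ℝ := M.Xtw.submatrix id ⇑M.emb

/-- `Σ = Z G Zᵀ + R`. -/
def Sig : Matrix (Fin n) (Fin n) ℝ := M.Z * M.Gm * M.Zᵀ + M.Rm

/-- `Σ̃ = Z̃ G Z̃ᵀ + R̃`. -/
def Sigt : Matrix (Fin M.m) (Fin M.m) ℝ := M.Zt * M.Gm * M.Ztᵀ + M.Rt

/-- `Λ = Σ̃ − Z̃GZᵀΣ⁻¹ZGZ̃ᵀ`. -/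
def Lam : Matrix (Fin M.m) (Fin M.m) ℝ :=
  M.Sigt - M.Zt * M.Gm * M.Zᵀ * M.Sig⁻¹ * M.Z * M.Gm * M.Ztᵀ

/-- `A = X̃(j) − Z̃GZᵀΣ⁻¹X(j)`. -/
def Amat : Matrix (Fin M.m) (Fin pj) ℝ := M.Xtj - M.Zt * M.Gm * M.Zᵀ * M.Sig⁻¹ * M.Xj

/-- the GLS matrix `(X(j)ᵀΣ⁻¹X(j))⁻¹X(j)ᵀΣ⁻¹` of the candidate model. -/
def gls : Matrix (Fin pj) (Fin n) ℝ := (M.Xjᵀ * M.Sig⁻¹ * M.Xj)⁻¹ * M.Xjᵀ * M.Sig⁻¹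

/-- `β̂_j = (X(j)ᵀΣ⁻¹X(j))⁻¹X(j)ᵀΣ⁻¹ y`. -/
def betaHat (y : Fin n → ℝ) : Fin pj → ℝ := M.gls *ᵥ y

/-- the residual `y − X(j)β̂_j`. -/
def resid (y : Fin n → ℝ) : Fin n → ℝ := y - M.Xj *ᵥ M.betaHat y

/-- `σ̂_j² = (y − X(j)β̂_j)ᵀΣ⁻¹(y − X(j)β̂_j)/n`. -/
def sigHat2 (y : Fin n → ℝ) : ℝ := (M.resid y ⬝ᵥ (M.Sig⁻¹ *ᵥ M.resid y)) / n

/-- the GLS matrix of the full model. -/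
def glsw : Matrix (Fin pw) (Fin n) ℝ := (M.Xwᵀ * M.Sig⁻¹ * M.Xw)⁻¹ * M.Xwᵀ * M.Sig⁻¹

/-- the full-model GLS estimator `β̃ = β̂_ω`. -/
def betaTilde (y : Fin n → ℝ) : Fin pw → ℝ := M.glsw *ᵥ y

/-- the full-model residual `y − X(ω)β̃`. -/
def residw (y : Fin n → ℝ) : Fin n → ℝ := y - M.Xw *ᵥ M.betaTilde y

/-- `σ̂_ω²`, the ML variance estimator of the full model. -/
def sigHatw2 (y : Fin n → ℝ) : ℝ := (M.residw y ⬝ᵥ (M.Sig⁻¹ *ᵥ M.residw y)) / n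

/-- `σ̃² = (y − X(ω)β̃)ᵀΣ⁻¹(y − X(ω)β̃)/(n−p_ω)`, the unbiased full-model estimator. -/
def sigTilde2 (y : Fin n → ℝ) : ℝ :=
  (M.residw y ⬝ᵥ (M.Sig⁻¹ *ᵥ M.residw y)) / ((n : ℝ) - pw)

/-- the empirical Bayes predictor `b̂_j = GZᵀΣ⁻¹(y − X(j)β̂_j)`. -/
def bHat (y : Fin n → ℝ) : Fin M.q → ℝ := (M.Gm * M.Zᵀ * M.Sig⁻¹) *ᵥ M.resid y

/-- `a = (X̃(j)β̂_j − X̃(ω)β*) − Z̃GZᵀΣ⁻¹(X(j)β̂_j − X(ω)β*)`. -/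
def avec (y : Fin n → ℝ) : Fin M.m → ℝ :=
  (M.Xtj *ᵥ M.betaHat y - M.Xtw *ᵥ M.beta)
    - (M.Zt * M.Gm * M.Zᵀ * M.Sig⁻¹) *ᵥ (M.Xj *ᵥ M.betaHat y - M.Xw *ᵥ M.beta)

/-- `γ = tr(R̃⁻¹Λ) + tr[R̃⁻¹A(X(j)ᵀΣ⁻¹X(j))⁻¹Aᵀ]`. -/
def gam : ℝ :=
  (M.Rt⁻¹ * M.Lam).trace + (M.Rt⁻¹ * M.Amat * (M.Xjᵀ * M.Sig⁻¹ * M.Xj)⁻¹ * M.Amatᵀ).trace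

/-- `P_j = Σ⁻¹X(j)(X(j)ᵀΣ⁻¹X(j))⁻¹X(j)ᵀΣ⁻¹`. -/
def Pj : Matrix (Fin n) (Fin n) ℝ :=
  M.Sig⁻¹ * M.Xj * (M.Xjᵀ * M.Sig⁻¹ * M.Xj)⁻¹ * M.Xjᵀ * M.Sig⁻¹

/-- `P_ω = Σ⁻¹X(ω)(X(ω)ᵀΣ⁻¹X(ω))⁻¹X(ω)ᵀΣ⁻¹`. -/
def Pw : Matrix (Fin n) (Fin n) ℝ :=
  M.Sig⁻¹ * M.Xw * (M.Xwᵀ * M.Sig⁻¹ * M.Xw)⁻¹ * M.Xwᵀ * M.Sig⁻¹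

/-- `P̃_j = X̃(j)(X(j)ᵀΣ⁻¹X(j))⁻¹X(j)ᵀΣ⁻¹`. -/
def Ptj : Matrix (Fin M.m) (Fin n) ℝ :=
  M.Xtj * (M.Xjᵀ * M.Sig⁻¹ * M.Xj)⁻¹ * M.Xjᵀ * M.Sig⁻¹

/-- `B = P̃_jX(ω) − X̃(ω) + Z̃GZᵀ(P_ω − P_j)X(ω)`. -/
def Bmat : Matrix (Fin M.m) (Fin pw) ℝ :=
  M.Ptj * M.Xw - M.Xtw + M.Zt * M.Gm * M.Zᵀ * (M.Pw - M.Pj) * M.Xw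

/-- `C = X(ω)ᵀ(P_ω − P_j)X(ω)`. -/
def Cmat : Matrix (Fin pw) (Fin pw) ℝ := M.Xwᵀ * (M.Pw - M.Pj) * M.Xw

/-- `δ = β*ᵀCβ*/(nσ*²)`. -/
def delta : ℝ := (M.beta ⬝ᵥ (M.Cmat *ᵥ M.beta)) / ((n : ℝ) * M.sig2)

/-- `λ = 1/(1+δ)`. -/
def lam : ℝ := 1 / (1 + M.delta)

/-- the candidate model is overspecified: `X(ω)β*` lies in the column space of `X(j)`. -/
def Overspec : Prop := ∃ c : Fin pj → ℝ, M.Xw *ᵥ M.beta = M.Xj *ᵥ c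

/-- the density of the multivariate normal `N_k(μ, s·S)`. -/
def gaussDensity {k : ℕ} (mu : Fin k → ℝ) (s : ℝ) (S : Matrix (Fin k) (Fin k) ℝ)
    (y : Fin k → ℝ) : ℝ :=
  Real.exp (-((y - mu) ⬝ᵥ (S⁻¹ *ᵥ (y - mu))) / (2 * s)) /
    Real.sqrt ((2 * π * s) ^ k * S.det)

/-- expectation of `h` under the marginal distribution `y ~ N_n(X(ω)β*, σ*²Σ)`. -/
def E (h : (Fin n → ℝ) → ℝ) : ℝ :=
  ∫ y : Fin n → ℝ, h y * gaussDensity (M.Xw *ᵥ M.beta) M.sig2 M.Sig y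

/-- the conditional Akaike information under covariate shift,
`cAI = E[m log(2πσ̂_j²) + log|R̃| + tr(R̃⁻¹Λ)σ*²/σ̂_j² + aᵀR̃⁻¹a/σ̂_j²]`. -/
def cAI : ℝ :=
  M.E (fun y => (M.m : ℝ) * Real.log (2 * π * M.sigHat2 y) + Real.log M.Rt.det
    + (M.Rt⁻¹ * M.Lam).trace * M.sig2 / M.sigHat2 y
    + (M.avec y ⬝ᵥ (M.Rt⁻¹ *ᵥ M.avec y)) / M.sigHat2 y)

/-- `R* = nγ/(n − p_j − 2)`. -/
def Rstar : ℝ := (n : ℝ) * M.gam / ((n : ℝ) - pj - 2)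

/-- `R₁ = γ(λ − 1)`. -/
def R1 : ℝ := M.gam * (M.lam - 1)

/-- `R₂ = γ·n⁻¹{−2λ³ + (p_j+4)λ² − (p_j+2)}`. -/
def R2 : ℝ := M.gam * (-2 * M.lam ^ 3 + ((pj : ℝ) + 4) * M.lam ^ 2 - ((pj : ℝ) + 2)) / n

/-- the quadratic form `bᵀBᵀR̃⁻¹Bb`. -/
def quadB (b : Fin pw → ℝ) : ℝ := b ⬝ᵥ ((M.Bmatᵀ * M.Rt⁻¹ * M.Bmat) *ᵥ b)

/-- `R₃ = λ·β*ᵀBᵀR̃⁻¹Bβ*/σ*²`. -/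
def R3 : ℝ := M.lam * M.quadB M.beta / M.sig2

/-- `R₄ = n⁻¹{−2λ³ + (p_j+4)λ²}·β*ᵀBᵀR̃⁻¹Bβ*/σ*²`. -/
def R4 : ℝ := (-2 * M.lam ^ 3 + ((pj : ℝ) + 4) * M.lam ^ 2) * M.quadB M.beta / M.sig2 / n

/-- `δ(η)` as a function of `η = (β, σ²)`. -/
def deltaF (b : Fin pw → ℝ) (s : ℝ) : ℝ := (b ⬝ᵥ (M.Cmat *ᵥ b)) / ((n : ℝ) * s)

/-- `λ(η) = 1/(1+δ(η))`. -/
def lamF (b : Fin pw → ℝ) (s : ℝ) : ℝ := 1 / (1 + M.deltaF b s)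

/-- `R₃(η) = λ(η)·βᵀBᵀR̃⁻¹Bβ/σ²`. -/
def R3F (b : Fin pw → ℝ) (s : ℝ) : ℝ := M.lamF b s * M.quadB b / s

/-- `R₄(η) = n⁻¹{−2λ(η)³ + (p_j+4)λ(η)²}·βᵀBᵀR̃⁻¹Bβ/σ²`. -/
def R4F (b : Fin pw → ℝ) (s : ℝ) : ℝ :=
  (-2 * (M.lamF b s) ^ 3 + ((pj : ℝ) + 4) * (M.lamF b s) ^ 2) * M.quadB b / s / n

/-- `D = BᵀR̃⁻¹B`. -/
def Dmat : Matrix (Fin pw) (Fin pw) ℝ := M.Bmatᵀ * M.Rt⁻¹ * M.Bmat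

/-- `∂²R₃/∂β∂βᵀ` (closed form, Lemma 2). -/
def hessBeta (b : Fin pw → ℝ) (s : ℝ) : Matrix (Fin pw) (Fin pw) ℝ :=
  (M.quadB b / s) •
      ((-(2 / ((n : ℝ) * s * (1 + M.deltaF b s) ^ 2))) • M.Cmat
        + (8 / ((n : ℝ) ^ 2 * s ^ 2 * (1 + M.deltaF b s) ^ 3)) •
            vecMulVec (M.Cmat *ᵥ b) (M.Cmatᵀ *ᵥ b))
    - ((4 / ((n : ℝ) * s ^ 2 * (1 + M.deltaF b s) ^ 2)) •
        (vecMulVec (M.Dmat *ᵥ b) (M.Cmatᵀ *ᵥ b) + vecMulVec (M.Cmat *ᵥ b) (M.Dmatᵀ *ᵥ b)))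
    + (2 * M.lamF b s / s) • M.Dmat

/-- `∂²R₃/(∂σ²)²` (closed form, Lemma 2). -/
def hessSig (b : Fin pw → ℝ) (s : ℝ) : ℝ :=
  (M.quadB b / s) *
      (-(2 * (b ⬝ᵥ (M.Cmat *ᵥ b)) / ((n : ℝ) * s ^ 3 * (1 + M.deltaF b s) ^ 2))
        + 2 * (b ⬝ᵥ (M.Cmat *ᵥ b)) ^ 2 / ((n : ℝ) ^ 2 * s ^ 4 * (1 + M.deltaF b s) ^ 3))
    - 2 * M.quadB b * (b ⬝ᵥ (M.Cmat *ᵥ b)) / ((n : ℝ) * s ^ 4 * (1 + M.deltaF b s) ^ 2)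
    + 2 * M.lamF b s * M.quadB b / s ^ 3

/-- the second-order bias term
`B₁(η) = ½ tr[(∂²R₃/∂β∂βᵀ)(η)·σ²(X(ω)ᵀΣ⁻¹X(ω))⁻¹] + ((σ²)²/(n−p_ω))·(∂²R₃/(∂σ²)²)(η)`. -/
def B1 (b : Fin pw → ℝ) (s : ℝ) : ℝ :=
  (1 / 2) * (M.hessBeta b s * (s • (M.Xwᵀ * M.Sig⁻¹ * M.Xw)⁻¹)).trace
    + (s ^ 2 / ((n : ℝ) - pw)) * M.hessSig b s

/-- `λ̂ = ((n−p_j)/(n−p_ω))·(σ̂_ω²/σ̂_j²)`. -/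
def lamHat (y : Fin n → ℝ) : ℝ :=
  (((n : ℝ) - pj) / ((n : ℝ) - pw)) * (M.sigHatw2 y / M.sigHat2 y)

/-- `λ̂²` (the estimator of `λ²`). -/
def lamHat2 (y : Fin n → ℝ) : ℝ :=
  (((n : ℝ) - pj) * ((n : ℝ) - pj + 2) / (((n : ℝ) - pw) * ((n : ℝ) - pw + 2)))
    * (M.sigHatw2 y / M.sigHat2 y) ^ 2

/-- `λ̂³` (the estimator of `λ³`). -/
def lamHat3 (y : Fin n → ℝ) : ℝ :=
  (((n : ℝ) - pj) * ((n : ℝ) - pj + 2) * ((n : ℝ) - pj + 4)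
      / (((n : ℝ) - pw) * ((n : ℝ) - pw + 2) * ((n : ℝ) - pw + 4)))
    * (M.sigHatw2 y / M.sigHat2 y) ^ 3

/-- `R̂₁ = γ{λ̂ − (−2λ̂³ + (p_j+2)λ̂² − p_jλ̂)/n − 1}`. -/
def R1Hat (y : Fin n → ℝ) : ℝ :=
  M.gam * (M.lamHat y
    - (-2 * M.lamHat3 y + ((pj : ℝ) + 2) * M.lamHat2 y - (pj : ℝ) * M.lamHat y) / n - 1)

/-- `R̂₂ = γ(−2λ̂³ + (p_j+4)λ̂² − (p_j+2))/n`. -/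
def R2Hat (y : Fin n → ℝ) : ℝ :=
  M.gam * (-2 * M.lamHat3 y + ((pj : ℝ) + 4) * M.lamHat2 y - ((pj : ℝ) + 2)) / n

/-- the bias-corrected plug-in estimator `R̃̃₃ = R₃(η̃) − B₁(η̃)`. -/
def R3TT (y : Fin n → ℝ) : ℝ :=
  M.R3F (M.betaTilde y) (M.sigTilde2 y) - M.B1 (M.betaTilde y) (M.sigTilde2 y)

/-- the plug-in estimator `R̃₄ = R₄(η̃)`. -/
def R4T (y : Fin n → ℝ) : ℝ := M.R4F (M.betaTilde y) (M.sigTilde2 y)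

/-- the proposed criterion `cAÎ`. -/
def cAIhat (y : Fin n → ℝ) : ℝ :=
  (M.m : ℝ) * Real.log (2 * π * M.sigHat2 y) + Real.log M.Rt.det
    + M.Rstar + M.R1Hat y + M.R2Hat y + M.R3TT y + M.R4T y

/-- the covariance matrix `ZGZᵀ + I_n` of the parametric bootstrap sample. -/
def SigBoot : Matrix (Fin n) (Fin n) ℝ := M.Z * M.Gm * M.Zᵀ + 1

/-- bootstrap expectation: `E_{η̃}[h(η̃†)]` where `η̃†` are the full-model GLS estimators
computed from `y† ~ N_n(X(ω)β̃, σ̃²(ZGZᵀ + I_n))`. -/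
def Eboot (y : Fin n → ℝ) (h : (Fin pw → ℝ) → ℝ → ℝ) : ℝ :=
  ∫ yd : Fin n → ℝ, h (M.betaTilde yd) (M.sigTilde2 yd) *
    gaussDensity (M.Xw *ᵥ M.betaTilde y) (M.sigTilde2 y) M.SigBoot yd

/-- the bootstrap bias-corrected estimator
`R̂₃ = 2R₃(η̃) − E_{η̃}[R₃(η̃†)] + E_{η̃}[B₁(η̃†)] − B₁(η̃)`. -/
def R3Hat (y : Fin n → ℝ) : ℝ :=
  2 * M.R3F (M.betaTilde y) (M.sigTilde2 y) - M.Eboot y M.R3F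
    + M.Eboot y M.B1 - M.B1 (M.betaTilde y) (M.sigTilde2 y)

/-- the bootstrap bias-corrected estimator `R̂₄ = 2R₄(η̃) − E_{η̃}[R₄(η̃†)]`. -/
def R4Hat (y : Fin n → ℝ) : ℝ :=
  2 * M.R4F (M.betaTilde y) (M.sigTilde2 y) - M.Eboot y M.R4F

/-- the proposed criterion `cAÎ†`. -/
def cAIhatDag (y : Fin n → ℝ) : ℝ :=
  (M.m : ℝ) * Real.log (2 * π * M.sigHat2 y) + Real.log M.Rt.det
    + M.Rstar + M.R1Hat y + M.R2Hat y + M.R3Hat y + M.R4Hat y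

end CSModel

/-! ### Gaussian moments of ratios of projections -/

section GaussianMoments

open ProbabilityTheory Module

variable {V : Type*} [NormedAddCommGroup V] [InnerProductSpace ℝ V] [FiniteDimensional ℝ V]
  [MeasurableSpace V] [BorelSpace V]

/-- The standard Gaussian measure on a Euclidean space has density
`(2π)^(-d/2) exp(-‖v‖²/2)`; both sides have the same characteristic function. -/
lemma stdGaussian_eq_withDensity :
    stdGaussian V = (volume : Measure V).withDensity
      (fun v => ENNReal.ofReal (((2 * π) ^ (finrank ℝ V / 2 : ℝ))⁻¹ *
        rexp (-(1 / 2) * ‖v‖ ^ 2))) := by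
  have hb : (0 : ℝ) < ((1 / 2 : ℝ) : ℂ).re := by norm_num
  have h_int : Integrable (fun v : V =>
      ((2 * π) ^ (finrank ℝ V / 2 : ℝ))⁻¹ * rexp (-(1 / 2) * ‖v‖ ^ 2)) := by
    refine Integrable.const_mul ?_ _
    have := (GaussianFourier.integrable_cexp_neg_mul_sq_norm_add hb 0 (0 : V)).norm
    refine this.congr (ae_of_all _ fun v => ?_)
    simp only [Complex.norm_exp]
    norm_num
    norm_cast
  have : IsFiniteMeasure ((volume : Measure V).withDensity
      (fun v => ENNReal.ofReal (((2 * π) ^ (finrank ℝ V / 2 : ℝ))⁻¹ * rexp (-(1 / 2) * ‖v‖ ^ 2)))) :=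
    isFiniteMeasure_withDensity_ofReal h_int.2
  refine Measure.ext_of_charFun ?_
  ext t
  rw [charFun_stdGaussian, charFun_apply, integral_withDensity_eq_integral_toReal_smul (by fun_prop)
    (ae_of_all _ fun _ => ENNReal.ofReal_lt_top)]
  have h := GaussianFourier.integral_cexp_neg_mul_sq_norm_add hb Complex.I t
  have hpos : (0 : ℝ) < (2 * π) ^ (finrank ℝ V / 2 : ℝ) := by positivity
  have e : ∀ v : V, (ENNReal.ofReal (((2 * π) ^ (finrank ℝ V / 2 : ℝ))⁻¹ *
        rexp (-(1 / 2) * ‖v‖ ^ 2))).toReal • Complex.exp ((inner ℝ v t : ℝ) * Complex.I)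
      = ((((2 * π) ^ (finrank ℝ V / 2 : ℝ))⁻¹ : ℝ) : ℂ) *
        Complex.exp (-((1 / 2 : ℝ) : ℂ) * ‖v‖ ^ 2 + Complex.I * (inner ℝ t v : ℝ)) := by
    intro v
    rw [ENNReal.toReal_ofReal (by positivity), Complex.real_smul, Complex.ofReal_mul, mul_assoc,
      Complex.exp_add, Complex.ofReal_exp, real_inner_comm, mul_comm Complex.I]
    push_cast
    rfl
  simp_rw [e]
  rw [integral_const_mul, h, ← mul_assoc]
  have e2 : ((π : ℂ) / ((1 / 2 : ℝ) : ℂ)) ^ (finrank ℝ V / 2 : ℂ)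
      = (((2 * π) ^ (finrank ℝ V / 2 : ℝ) : ℝ) : ℂ) := by
    rw [Complex.ofReal_cpow (by positivity)]
    congr 1
    · push_cast; ring
    · push_cast; ring
  rw [e2, ← Complex.ofReal_mul, inv_mul_cancel₀ hpos.ne']
  simp only [Complex.ofReal_one, one_mul, Complex.I_sq]
  congr 1
  push_cast
  ring

lemma integral_stdGaussian (f : V → ℝ) :
    ∫ v, f v ∂(stdGaussian V)
      = ((2 * π) ^ (finrank ℝ V / 2 : ℝ))⁻¹ * ∫ v, f v * rexp (-(1 / 2) * ‖v‖ ^ 2) := by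
  rw [stdGaussian_eq_withDensity, integral_withDensity_eq_integral_toReal_smul (by fun_prop)
    (ae_of_all _ fun _ => ENNReal.ofReal_lt_top), ← integral_const_mul]
  refine integral_congr_ae (ae_of_all _ fun v => ?_)
  simp only
  rw [ENNReal.toReal_ofReal (by positivity), smul_eq_mul]
  ring

/-- Polar coordinates: the integral of a positively homogeneous function of degree `0` times a
radial function is a product. -/
lemma integral_homogeneous_mul_radial (f : V → ℝ) (hf : ∀ (r : ℝ) (v : V), 0 < r → f (r • v) = f v)
    (hV : 0 < finrank ℝ V) (g : ℝ → ℝ) :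
    ∫ v, f v * g ‖v‖ = (∫ s, f s.1 ∂(volume : Measure V).toSphere) *
      ∫ r in Set.Ioi (0 : ℝ), r ^ (finrank ℝ V - 1) * g r := by
  have : Nontrivial V := finrank_pos_iff.1 hV
  calc
    ∫ v, f v * g ‖v‖ = ∫ x : ({(0)}ᶜ : Set V), f x.1 * g (‖x.1‖) ∂((volume : Measure V).comap (↑)) := by
      rw [integral_subtype_comap (measurableSet_singleton _).compl fun x ↦ f x * g (‖x‖),
        restrict_compl_singleton]
    _ = ∫ x, f x.1.1 * g x.2.1
          ∂(volume : Measure V).toSphere.prod (.volumeIoiPow (finrank ℝ V - 1)) := by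
      rw [← (volume : Measure V).measurePreserving_homeomorphUnitSphereProd.integral_comp
        (Homeomorph.measurableEmbedding _)]
      refine integral_congr_ae (ae_of_all _ fun x => ?_)
      have hx : 0 < ‖x.1‖ := norm_pos_iff.2 x.2
      simp only [homeomorphUnitSphereProd_apply_fst_coe, homeomorphUnitSphereProd_apply_snd_coe]
      rw [hf _ _ (inv_pos.2 hx)]
    _ = (∫ s, f s.1 ∂(volume : Measure V).toSphere) *
          ∫ x : Set.Ioi (0 : ℝ), g x.1 ∂.volumeIoiPow (finrank ℝ V - 1) :=
      integral_prod_mul (fun s : Metric.sphere (0 : V) 1 => f s.1) (fun x : Set.Ioi (0 : ℝ) => g x.1)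
    _ = _ := by
      congr 1
      simp only [Measure.volumeIoiPow, ENNReal.ofReal]
      rw [integral_withDensity_eq_integral_smul,
        integral_subtype_comap measurableSet_Ioi
          fun a ↦ Real.toNNReal (a ^ (finrank ℝ V - 1)) • g a,
        setIntegral_congr_fun measurableSet_Ioi fun x hx ↦ ?_]
      · rw [NNReal.smul_def, Real.coe_toNNReal _ (pow_nonneg hx.out.le _), smul_eq_mul]
      · exact (measurable_subtype_coe.pow_const _).real_toNNReal

/-- The recursion for the radial Gaussian moments, from `Γ(x + 1) = x Γ(x)`. -/
lemma radial_moment_succ (m : ℕ) :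
    ∫ r in Set.Ioi (0 : ℝ), r ^ (m + 2) * rexp (-(1 / 2) * r ^ 2)
      = (m + 1) * ∫ r in Set.Ioi (0 : ℝ), r ^ m * rexp (-(1 / 2) * r ^ 2) := by
  have key : ∀ k : ℕ, ∫ r in Set.Ioi (0 : ℝ), r ^ k * rexp (-(1 / 2) * r ^ 2)
      = (1 / 2 : ℝ) ^ (-((k : ℝ) + 1) / 2) * (1 / 2) * Real.Gamma (((k : ℝ) + 1) / 2) := by
    intro k
    have hk : (0 : ℝ) ≤ k := Nat.cast_nonneg k
    rw [← integral_rpow_mul_exp_neg_mul_rpow (p := 2) (q := (k : ℝ)) (b := 1 / 2) (by norm_num)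
      (by linarith) (by norm_num)]
    refine setIntegral_congr_fun measurableSet_Ioi fun r _ => ?_
    simp only [Real.rpow_natCast, Real.rpow_two]
  rw [key, key]
  have h0 : ((m : ℝ) + 1) / 2 ≠ 0 := by positivity
  have h1 : (((m + 2 : ℕ) : ℝ) + 1) / 2 = ((m : ℝ) + 1) / 2 + 1 := by push_cast; ring
  have h2 : -(((m + 2 : ℕ) : ℝ) + 1) / 2 = -((m : ℝ) + 1) / 2 + (-1) := by push_cast; ring
  rw [h1, h2, Real.Gamma_add_one h0, Real.rpow_add (by norm_num), Real.rpow_neg_one]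
  ring

/-- For a standard Gaussian vector `v` in dimension `d`, the radius is independent of the
direction, so a positively homogeneous function of degree `0` times `‖v‖²ᵏ` has expectation
`d(d+2)⋯(d+2k-2)` times the expectation of the function. -/
lemma integral_homogeneous_mul_norm_pow (f : V → ℝ)
    (hf : ∀ (r : ℝ) (v : V), 0 < r → f (r • v) = f v) (hV : 0 < finrank ℝ V) (k : ℕ) :
    ∫ v, f v * (‖v‖ ^ 2) ^ k ∂(stdGaussian V)
      = (∏ i ∈ Finset.range k, ((finrank ℝ V : ℝ) + 2 * i)) * ∫ v, f v ∂(stdGaussian V) := by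
  have key : ∀ k : ℕ, ∫ v, f v * (‖v‖ ^ 2) ^ k ∂(stdGaussian V)
      = ((2 * π) ^ (finrank ℝ V / 2 : ℝ))⁻¹ * ((∫ s, f s.1 ∂(volume : Measure V).toSphere) *
        ∫ r in Set.Ioi (0 : ℝ), r ^ (finrank ℝ V - 1 + 2 * k) * rexp (-(1 / 2) * r ^ 2)) := by
    intro k
    rw [integral_stdGaussian]
    congr 1
    have := integral_homogeneous_mul_radial f hf hV
      (fun r => (r ^ 2) ^ k * rexp (-(1 / 2) * r ^ 2))
    simp only [← mul_assoc] at this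
    rw [this]
    congr 1
    refine setIntegral_congr_fun measurableSet_Ioi fun r _ => ?_
    rw [← pow_mul, ← pow_add]
  induction k with
  | zero => simp
  | succ k ih =>
    rw [Finset.prod_range_succ, mul_right_comm, ← ih, key, key]
    have : finrank ℝ V - 1 + 2 * (k + 1) = (finrank ℝ V - 1 + 2 * k) + 2 := by ring
    rw [this, radial_moment_succ]
    push_cast [Nat.cast_sub (show 1 ≤ finrank ℝ V from hV)]
    ring

/-- The orthogonal projection of a standard Gaussian vector is standard Gaussian. -/
lemma stdGaussian_map_orthogonalProjection (K : Submodule ℝ V) :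
    (stdGaussian V).map K.orthogonalProjectionOnto = stdGaussian K := by
  have : IsFiniteMeasure ((stdGaussian V).map K.orthogonalProjectionOnto) := inferInstance
  refine Measure.ext_of_charFun ?_
  ext t
  rw [charFun_stdGaussian, charFun_apply, integral_map (by fun_prop) (by fun_prop)]
  have := charFun_stdGaussian (E := V) (t : V)
  rw [charFun_apply] at this
  simp only [Submodule.inner_orthogonalProjectionOnto_eq_of_mem_right]
  rw [this]
  simp

/-- For nested subspaces `W ≤ K`, the ratio `‖P_W x‖²/‖P_K x‖²` has the moments of the
`Beta(dim W / 2, (dim K - dim W) / 2)` distribution: multiplying by `‖P_K x‖²ᵏ`, which is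
independent of the ratio, leaves the chi-square moment of `‖P_W x‖²`. -/
lemma integral_ratio_pow {W K : Submodule ℝ V} (hWK : W ≤ K) (hW : 0 < finrank ℝ W) (k : ℕ) :
    (∏ i ∈ Finset.range k, ((finrank ℝ K : ℝ) + 2 * i)) *
      ∫ x, (‖W.starProjection x‖ ^ 2 / ‖K.starProjection x‖ ^ 2) ^ k ∂(stdGaussian V)
      = ∏ i ∈ Finset.range k, ((finrank ℝ W : ℝ) + 2 * i) := by
  have hK : 0 < finrank ℝ K := hW.trans_le (Submodule.finrank_mono hWK)
  have hproj : ∀ x : V, W.starProjection (K.starProjection x) = W.starProjection x := fun x => by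
    exact DFunLike.congr_fun (Submodule.starProjection_comp_starProjection_of_le hWK) x
  have hle : ∀ x : V, ‖W.starProjection x‖ ≤ ‖K.starProjection x‖ := fun x => by
    rw [← hproj]; exact W.norm_starProjection_apply_le _
  have h1 : ∫ x, (‖W.starProjection x‖ ^ 2 / ‖K.starProjection x‖ ^ 2) ^ k ∂(stdGaussian V)
      = ∫ v : K, (‖W.starProjection (v : V)‖ ^ 2 / ‖v‖ ^ 2) ^ k ∂(stdGaussian K) := by
    rw [← stdGaussian_map_orthogonalProjection K, integral_map (by fun_prop)
      (Measurable.aestronglyMeasurable (by fun_prop))]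
    refine integral_congr_ae (ae_of_all _ fun x => ?_)
    simp only
    rw [← hproj x]
    rfl
  have h2 : ∫ v : K, (‖W.starProjection (v : V)‖ ^ 2 / ‖v‖ ^ 2) ^ k * (‖v‖ ^ 2) ^ k ∂(stdGaussian K)
      = ∫ x, (‖W.starProjection x‖ ^ 2) ^ k ∂(stdGaussian V) := by
    rw [← stdGaussian_map_orthogonalProjection K, integral_map (by fun_prop)
      (Measurable.aestronglyMeasurable (by fun_prop))]
    refine integral_congr_ae (ae_of_all _ fun x => ?_)
    simp only
    rw [← mul_pow]
    congr 1
    change ‖W.starProjection (K.starProjection x)‖ ^ 2 / ‖K.starProjection x‖ ^ 2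
      * ‖K.starProjection x‖ ^ 2 = _
    rw [hproj]
    -- where the denominator vanishes, so does the numerator
    refine div_mul_cancel_of_imp fun h => ?_
    have h0 : ‖K.starProjection x‖ = 0 := by simpa using h
    have := hle x
    rw [h0] at this
    simp [le_antisymm this (norm_nonneg _)]
  have h3 : ∫ x, (‖W.starProjection x‖ ^ 2) ^ k ∂(stdGaussian V)
      = ∫ w : W, 1 * (‖w‖ ^ 2) ^ k ∂(stdGaussian W) := by
    rw [← stdGaussian_map_orthogonalProjection W, integral_map (by fun_prop) (by fun_prop)]
    refine integral_congr_ae (ae_of_all _ fun x => ?_)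
    simp only [one_mul]
    rfl
  rw [h1, ← integral_homogeneous_mul_norm_pow _ _ hK, h2, h3,
    integral_homogeneous_mul_norm_pow (fun _ => (1 : ℝ)) (fun _ _ _ => rfl) hW]
  · simp
  · intro r v hr
    simp only [Submodule.coe_smul, map_smul, norm_smul, mul_pow]
    rw [mul_div_mul_left]
    simp [hr.ne']

lemma integrable_ratio_pow {W K : Submodule ℝ V} (hWK : W ≤ K) (k : ℕ) :
    Integrable (fun x => (‖W.starProjection x‖ ^ 2 / ‖K.starProjection x‖ ^ 2) ^ k)
      (stdGaussian V) := by
  refine Integrable.of_bound (C := 1) (Measurable.aestronglyMeasurable (by fun_prop))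
    (ae_of_all _ fun x => ?_)
  have hle : ‖W.starProjection x‖ ≤ ‖K.starProjection x‖ := by
    have := DFunLike.congr_fun (Submodule.starProjection_comp_starProjection_of_le hWK) x
    rw [← this]; exact W.norm_starProjection_apply_le _
  rw [Real.norm_of_nonneg (by positivity)]
  refine pow_le_one₀ (by positivity) (div_le_one_of_le₀ (by gcongr) (by positivity))

end GaussianMoments

/-! ### Whitening and least squares residuals -/

section Whitening

open ProbabilityTheory Module

/-- The column space of a matrix, as a subspace of Euclidean space. -/
def colSpace {n p : ℕ} (Y : Matrix (Fin n) (Fin p) ℝ) : Submodule ℝ (EuclideanSpace ℝ (Fin n)) :=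
  (LinearMap.range Y.mulVecLin).map (WithLp.linearEquiv 2 ℝ (Fin n → ℝ)).symm.toLinearMap

lemma mem_colSpace {n p : ℕ} (Y : Matrix (Fin n) (Fin p) ℝ) (c : Fin p → ℝ) :
    WithLp.toLp 2 (Y *ᵥ c) ∈ colSpace Y :=
  Submodule.mem_map_of_mem ⟨c, rfl⟩

lemma exists_of_mem_colSpace {n p : ℕ} {Y : Matrix (Fin n) (Fin p) ℝ}
    {x : EuclideanSpace ℝ (Fin n)} (hx : x ∈ colSpace Y) :
    ∃ c : Fin p → ℝ, x = WithLp.toLp 2 (Y *ᵥ c) := by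
  obtain ⟨_, ⟨c, rfl⟩, rfl⟩ := hx
  exact ⟨c, rfl⟩

lemma finrank_colSpace_orthogonal {n p : ℕ} (Y : Matrix (Fin n) (Fin p) ℝ) (hY : Y.rank = p) :
    p + finrank ℝ (colSpace Y)ᗮ = n := by
  have h := (colSpace Y).finrank_add_finrank_orthogonal
  have h2 : finrank ℝ (colSpace Y) = p := by
    rw [colSpace, LinearEquiv.finrank_map_eq]
    exact hY
  rw [h2] at h
  simpa using h

/-- A positive definite matrix is `KᵀK` with `K` invertible. -/
lemma exists_whitening {n : ℕ} {P : Matrix (Fin n) (Fin n) ℝ} (hP : P.PosDef) :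
    ∃ K : Matrix (Fin n) (Fin n) ℝ, IsUnit K.det ∧ P = Kᵀ * K := by
  obtain ⟨K, hK⟩ : ∃ K : Matrix (Fin n) (Fin n) ℝ, P = Kᵀ * K := by
    open scoped MatrixOrder in
    refine ⟨CFC.sqrt P, ?_⟩
    have h0 : (0 : Matrix (Fin n) (Fin n) ℝ) ≤ P := Matrix.nonneg_iff_posSemidef.2 hP.posSemidef
    have h1 : (CFC.sqrt P).PosSemidef := Matrix.nonneg_iff_posSemidef.1 (CFC.sqrt_nonneg P)
    have h2 : (CFC.sqrt P)ᵀ = CFC.sqrt P := by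
      simpa [Matrix.conjTranspose_eq_transpose_of_trivial] using h1.isHermitian.eq
    rw [h2, CFC.sqrt_mul_sqrt_self P h0]
  refine ⟨K, ?_, hK⟩
  have h := (Matrix.isUnit_iff_isUnit_det _).1 hP.isUnit
  rw [hK, Matrix.det_mul] at h
  exact isUnit_of_mul_isUnit_right h

lemma isUnit_transpose_mul_self {n p : ℕ} {Y : Matrix (Fin n) (Fin p) ℝ} (hY : Y.rank = p) :
    IsUnit (Yᵀ * Y).det := by
  rw [← Matrix.isUnit_iff_isUnit_det, ← Matrix.mulVec_injective_iff_isUnit]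
  have hr : (Yᵀ * Y).rank = p := by rw [Matrix.rank_transpose_mul_self, hY]
  change Function.Injective (Yᵀ * Y).mulVecLin
  rw [LinearMap.injective_iff_surjective, ← LinearMap.range_eq_top]
  refine Submodule.eq_top_of_finrank_eq ?_
  rw [Matrix.rank] at hr
  simpa using hr

lemma toLp_dotProduct {n : ℕ} (u : Fin n → ℝ) : u ⬝ᵥ u = ‖WithLp.toLp 2 u‖ ^ 2 := by
  rw [EuclideanSpace.real_norm_sq_eq]
  simp [dotProduct, pow_two]

/-- In the whitened coordinate `z`, where `y = Xc + sK⁻¹z` and `P = KᵀK`, the generalized least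
squares residual sum of squares is `s²` times the squared norm of the projection of `z` onto the
orthogonal complement of the column space of `KX`. -/
lemma residual_whitened {n p : ℕ} {K P : Matrix (Fin n) (Fin n) ℝ} (hK : IsUnit K.det)
    (hP : P = Kᵀ * K) (X : Matrix (Fin n) (Fin p) ℝ) (hX : X.rank = p) (c : Fin p → ℝ) (s : ℝ)
    (z : EuclideanSpace ℝ (Fin n)) (y r : Fin n → ℝ)
    (hy : y = X *ᵥ c + s • (K⁻¹ *ᵥ z.ofLp))
    (hr : r = y - X *ᵥ (((Xᵀ * P * X)⁻¹ * Xᵀ * P) *ᵥ y)) :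
    r ⬝ᵥ (P *ᵥ r) = s ^ 2 * ‖(colSpace (K * X))ᗮ.starProjection z‖ ^ 2 := by
  set Y := K * X with hYdef
  have hYr : Y.rank = p := by rw [hYdef, Matrix.rank_mul_eq_right_of_isUnit_det _ _ hK, hX]
  have hN := isUnit_transpose_mul_self hYr
  have hXN : Xᵀ * P * X = Yᵀ * Y := by
    rw [hP, hYdef, Matrix.transpose_mul]; simp only [Matrix.mul_assoc]
  set v : Fin n → ℝ := z.ofLp - Y *ᵥ ((Yᵀ * Y)⁻¹ *ᵥ (Yᵀ *ᵥ z.ofLp)) with hv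
  have hKy : K *ᵥ y = Y *ᵥ c + s • z.ofLp := by
    rw [hy, Matrix.mulVec_add, Matrix.mulVec_mulVec, Matrix.mulVec_smul, Matrix.mulVec_mulVec,
      Matrix.mul_nonsing_inv _ hK, Matrix.one_mulVec]
  have hKr : K *ᵥ r = s • v := by
    have e1 : ((Xᵀ * P * X)⁻¹ * Xᵀ * P) *ᵥ y = (Yᵀ * Y)⁻¹ *ᵥ (Yᵀ *ᵥ (K *ᵥ y)) := by
      rw [hXN, hP, hYdef, Matrix.transpose_mul]
      simp only [Matrix.mulVec_mulVec, Matrix.mul_assoc]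
    have e2 : (Yᵀ * Y)⁻¹ *ᵥ (Yᵀ *ᵥ (Y *ᵥ c)) = c := by
      rw [Matrix.mulVec_mulVec, Matrix.mulVec_mulVec, Matrix.mul_assoc,
        Matrix.nonsing_inv_mul _ hN, Matrix.one_mulVec]
    rw [hr, Matrix.mulVec_sub, e1, Matrix.mulVec_mulVec, ← hYdef, hKy]
    simp only [Matrix.mulVec_add, Matrix.mulVec_smul, e2]
    rw [hv, smul_sub]
    abel
  have hproj : (colSpace Y)ᗮ.starProjection z = WithLp.toLp 2 v := by
    refine Submodule.eq_starProjection_of_mem_orthogonal ?_ ?_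
    · rw [Submodule.mem_orthogonal]
      intro u hu
      obtain ⟨d, rfl⟩ := exists_of_mem_colSpace hu
      have : Yᵀ *ᵥ v = 0 := by
        rw [hv, Matrix.mulVec_sub, Matrix.mulVec_mulVec, Matrix.mulVec_mulVec,
          Matrix.mul_nonsing_inv _ hN, Matrix.one_mulVec, sub_self]
      rw [EuclideanSpace.inner_toLp_toLp]
      simp only [star_trivial]
      rw [Matrix.dotProduct_mulVec, ← Matrix.mulVec_transpose, this, zero_dotProduct]
    · refine Submodule.le_orthogonal_orthogonal _ ?_
      have : z - WithLp.toLp 2 v = WithLp.toLp 2 (Y *ᵥ ((Yᵀ * Y)⁻¹ *ᵥ (Yᵀ *ᵥ z.ofLp))) := by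
        ext i; simp [hv]
      rw [this]
      exact mem_colSpace _ _
  rw [hproj, hP, ← Matrix.mulVec_mulVec, Matrix.dotProduct_mulVec, Matrix.vecMul_transpose, hKr,
    smul_dotProduct, dotProduct_smul, toLp_dotProduct]
  simp only [smul_eq_mul]
  ring

end Whitening

/-! ### Expectations in the mixed model -/

namespace CSModel

open ProbabilityTheory Module

variable {pw pj n : ℕ} (M : CSModel pw pj n)

lemma posDef_Sig : M.Sig.PosDef := by
  refine Matrix.PosDef.posSemidef_add ?_ M.hR
  simpa [Matrix.conjTranspose_eq_transpose_of_trivial] using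
    M.hG.posSemidef.mul_mul_conjTranspose_same M.Z

/-- Up to a constant factor, the expectation under `N(X(ω)β*, σ*²Σ)` is the standard Gaussian
expectation in the whitened coordinate. -/
lemma exists_E_eq {K : Matrix (Fin n) (Fin n) ℝ} (hK : IsUnit K.det) (hP : M.Sig⁻¹ = Kᵀ * K) :
    ∃ C : ℝ, ∀ h : (Fin n → ℝ) → ℝ, M.E h = C * ∫ z : EuclideanSpace ℝ (Fin n),
      h (M.Xw *ᵥ M.beta + √M.sig2 • (K⁻¹ *ᵥ z.ofLp)) ∂(stdGaussian (EuclideanSpace ℝ (Fin n))) := by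
  set μ := M.Xw *ᵥ M.beta with hμ
  set s := √M.sig2 with hs
  have hs0 : 0 < s := Real.sqrt_pos.2 M.hsig
  have hs2 : s ^ 2 = M.sig2 := Real.sq_sqrt M.hsig.le
  set f : (Fin n → ℝ) →ₗ[ℝ] (Fin n → ℝ) := (s • K⁻¹).mulVecLin with hf
  have hfa : ∀ x, f x = s • (K⁻¹ *ᵥ x) := fun x => by
    rw [hf, Matrix.mulVecLin_apply, Matrix.smul_mulVec]
  have hdet : LinearMap.det f ≠ 0 := by
    rw [hf, ← Matrix.toLin'_apply', LinearMap.det_toLin', Matrix.det_smul]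
    have := (Matrix.isUnit_nonsing_inv_det K hK).ne_zero
    positivity
  have hinj : Function.Injective f := by
    exact (LinearMap.isUnit_iff_isUnit_det f).2 hdet.isUnit |> fun h =>
      ((Module.End.isUnit_iff f).1 h).1
  have hemb : MeasurableEmbedding f :=
    (LinearMap.isClosedEmbedding_of_injective (LinearMap.ker_eq_bot.2 hinj)).measurableEmbedding
  set a : ℝ := |(LinearMap.det f)⁻¹| with ha
  have ha0 : 0 < a := abs_pos.2 (inv_ne_zero hdet)
  -- change of variables `y = μ + f x`
  have hcv : ∀ F : (Fin n → ℝ) → ℝ, ∫ y, F y = a⁻¹ * ∫ x, F (μ + f x) := by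
    intro F
    have h1 : ∫ x, F (μ + f x) = ∫ y, F (μ + y) ∂(Measure.map f volume) :=
      (hemb.integral_map (fun y => F (μ + y))).symm
    rw [h1, Real.map_linearMap_volume_pi_eq_smul_volume_pi hdet, integral_smul_measure,
      integral_add_left_eq_self F μ, ENNReal.toReal_ofReal (abs_nonneg _), smul_eq_mul, ← mul_assoc,
      inv_mul_cancel₀ ha0.ne', one_mul]
  refine ⟨a⁻¹ * (√((2 * π * M.sig2) ^ n * M.Sig.det))⁻¹ *
    (2 * π) ^ (finrank ℝ (EuclideanSpace ℝ (Fin n)) / 2 : ℝ), fun h => ?_⟩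
  have hc : (0 : ℝ) < (2 * π) ^ (finrank ℝ (EuclideanSpace ℝ (Fin n)) / 2 : ℝ) := by positivity
  rw [integral_stdGaussian, E, hcv, ← mul_assoc, mul_assoc _ _ (_)⁻¹, mul_inv_cancel₀ hc.ne',
    mul_one, mul_assoc]
  congr 1
  rw [← integral_const_mul, ← hμ]
  rw [← (PiLp.volume_preserving_ofLp (Fin n)).integral_comp
    (MeasurableEquiv.toLp 2 (Fin n → ℝ)).symm.measurableEmbedding
    (fun x : Fin n → ℝ => h (μ + f x) * gaussDensity μ M.sig2 M.Sig (μ + f x))]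
  refine integral_congr_ae (ae_of_all _ fun z => ?_)
  have hq : (K⁻¹ *ᵥ z.ofLp) ⬝ᵥ ((Kᵀ * K) *ᵥ (K⁻¹ *ᵥ z.ofLp)) = ‖z‖ ^ 2 := by
    rw [← Matrix.mulVec_mulVec, Matrix.dotProduct_mulVec, Matrix.vecMul_transpose,
      Matrix.mulVec_mulVec, Matrix.mul_nonsing_inv _ hK, Matrix.one_mulVec, toLp_dotProduct]
  simp only [gaussDensity, hfa, add_sub_cancel_left, hP]
  rw [Matrix.mulVec_smul, smul_dotProduct, dotProduct_smul, hq, ← hs2]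
  have : -(s • s • ‖z‖ ^ 2) / (2 * s ^ 2) = -(1 / 2) * ‖z‖ ^ 2 := by
    simp only [smul_eq_mul]; field_simp
  rw [this]
  ring

/-- Under overspecification `σ̂_ω²/σ̂_j²` is the ratio of squared norms of the projections of a
standard Gaussian vector on nested subspaces of dimensions `n - p_ω` and `n - p_j`. -/
lemma exists_ratio (hover : M.Overspec) (hn : pw < n) :
    ∃ (C : ℝ) (W V : Submodule ℝ (EuclideanSpace ℝ (Fin n))), W ≤ V ∧
      pw + finrank ℝ W = n ∧ pj + finrank ℝ V = n ∧
      ∀ g : ℝ → ℝ, M.E (fun y => g (M.sigHatw2 y / M.sigHat2 y)) =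
        C * ∫ z, g (‖W.starProjection z‖ ^ 2 / ‖V.starProjection z‖ ^ 2)
          ∂(stdGaussian (EuclideanSpace ℝ (Fin n))) := by
  obtain ⟨K, hK, hP⟩ := exists_whitening M.posDef_Sig.inv
  obtain ⟨C, hC⟩ := M.exists_E_eq hK hP
  obtain ⟨c, hc⟩ := hover
  have hXj : M.Xj = M.Xw * (1 : Matrix (Fin pw) (Fin pw) ℝ).submatrix id M.emb := by
    ext i k
    simp [Xj, Matrix.mul_apply, Matrix.one_apply]
  have hrank : ∀ {p : ℕ} (X : Matrix (Fin n) (Fin p) ℝ), X.rank = p → (K * X).rank = p :=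
    fun X hX => by rw [Matrix.rank_mul_eq_right_of_isUnit_det _ _ hK, hX]
  refine ⟨C, (colSpace (K * M.Xw))ᗮ, (colSpace (K * M.Xj))ᗮ, ?_,
    finrank_colSpace_orthogonal _ (hrank _ M.hrankw),
    finrank_colSpace_orthogonal _ (hrank _ M.hrankj), fun g => ?_⟩
  · refine Submodule.orthogonal_le fun x hx => ?_
    obtain ⟨d, rfl⟩ := exists_of_mem_colSpace hx
    rw [hXj, ← Matrix.mul_assoc, ← Matrix.mulVec_mulVec]
    exact mem_colSpace _ _
  · rw [hC]
    congr 1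
    refine integral_congr_ae (ae_of_all _ fun z => ?_)
    have hw := residual_whitened hK hP M.Xw M.hrankw M.beta (√M.sig2) z _ _ rfl rfl
    have hj := residual_whitened hK hP M.Xj M.hrankj c (√M.sig2) z _ _ rfl rfl
    rw [← hc] at hj
    have hs : √M.sig2 ^ 2 ≠ 0 := by rw [Real.sq_sqrt M.hsig.le]; exact M.hsig.ne'
    have hn0 : (n : ℝ) ≠ 0 := by
      have : 0 < n := by omega
      positivity
    simp only [sigHatw2, sigHat2, residw, resid, betaTilde, betaHat, glsw, gls]
    rw [hw, hj, div_div_div_cancel_right₀ hn0, mul_div_mul_left _ _ hs]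

end CSModel

open CSModel in
theorem stmt3 {pw pj n : ℕ} (M : CSModel pw pj n)
    (hover : M.Overspec) (hpj : pj < pw) (hn : pw + 4 < n) :
    M.E M.R1Hat = 0 ∧ M.E M.R2Hat = 0 := by
  obtain ⟨C, W, V, hWV, hW, hV, hE⟩ := M.exists_ratio hover (by omega)
  set γ := ProbabilityTheory.stdGaussian (EuclideanSpace ℝ (Fin n))
  have hW' : (Module.finrank ℝ W : ℝ) = n - pw := by
    have := congrArg (Nat.cast : ℕ → ℝ) hW
    push_cast at this
    linarith
  have hV' : (Module.finrank ℝ V : ℝ) = n - pj := by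
    have := congrArg (Nat.cast : ℕ → ℝ) hV
    push_cast at this
    linarith
  have ha : (0 : ℝ) < n - pw := by rw [← hW']; exact_mod_cast (by omega)
  have hb : (0 : ℝ) < n - pj := by rw [← hV']; exact_mod_cast (by omega)
  have hn0 : (0 : ℝ) < n := by exact_mod_cast (by omega)
  have h1 := integral_ratio_pow hWV (by omega) 1
  have h2 := integral_ratio_pow hWV (by omega) 2
  have h3 := integral_ratio_pow hWV (by omega) 3
  have i1 := integrable_ratio_pow hWV 1
  have i2 := integrable_ratio_pow hWV 2
  have i3 := integrable_ratio_pow hWV 3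
  simp only [Finset.prod_range_succ, Finset.prod_range_zero, hW', hV', one_mul, Nat.cast_zero,
    mul_zero, add_zero, Nat.cast_one, mul_one, Nat.cast_ofNat] at h1 h2 h3
  norm_num only at h2 h3
  set m1 := ∫ x, (‖W.starProjection x‖ ^ 2 / ‖V.starProjection x‖ ^ 2) ^ 1 ∂γ
  set m2 := ∫ x, (‖W.starProjection x‖ ^ 2 / ‖V.starProjection x‖ ^ 2) ^ 2 ∂γ
  set m3 := ∫ x, (‖W.starProjection x‖ ^ 2 / ‖V.starProjection x‖ ^ 2) ^ 3 ∂γ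
  -- the normalizing constants make the estimators `λ̂`, `λ̂²`, `λ̂³` unbiased for `1`
  have e1 : (((n : ℝ) - pj) / ((n : ℝ) - pw)) * m1 = 1 := by
    field_simp; linarith
  have e2 : (((n : ℝ) - pj) * ((n : ℝ) - pj + 2) / (((n : ℝ) - pw) * ((n : ℝ) - pw + 2))) * m2
      = 1 := by
    field_simp; linarith
  have e3 : (((n : ℝ) - pj) * ((n : ℝ) - pj + 2) * ((n : ℝ) - pj + 4)
      / (((n : ℝ) - pw) * ((n : ℝ) - pw + 2) * ((n : ℝ) - pw + 4))) * m3 = 1 := by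
    field_simp; linarith
  have hcubic : ∀ k0 k1 k2 k3 : ℝ, M.E (fun y => k0 + k1 * (M.sigHatw2 y / M.sigHat2 y) ^ 1
      + k2 * (M.sigHatw2 y / M.sigHat2 y) ^ 2 + k3 * (M.sigHatw2 y / M.sigHat2 y) ^ 3)
      = C * (k0 + k1 * m1 + k2 * m2 + k3 * m3) := by
    intro k0 k1 k2 k3
    rw [hE (fun u => k0 + k1 * u ^ 1 + k2 * u ^ 2 + k3 * u ^ 3)]
    have i0 : Integrable (fun _ : EuclideanSpace ℝ (Fin n) => k0) γ := integrable_const _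
    have j1 : Integrable (fun x =>
        k0 + k1 * (‖W.starProjection x‖ ^ 2 / ‖V.starProjection x‖ ^ 2) ^ 1) γ :=
      i0.add (i1.const_mul k1)
    have j2 : Integrable (fun x =>
        k0 + k1 * (‖W.starProjection x‖ ^ 2 / ‖V.starProjection x‖ ^ 2) ^ 1
          + k2 * (‖W.starProjection x‖ ^ 2 / ‖V.starProjection x‖ ^ 2) ^ 2) γ :=
      j1.add (i2.const_mul k2)
    rw [integral_add j2 (i3.const_mul k3), integral_add j1 (i2.const_mul k2),
      integral_add i0 (i1.const_mul k1), integral_const_mul, integral_const_mul,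
      integral_const_mul]
    simp [m1, m2, m3, γ]
  set l1 := ((n : ℝ) - pj) / ((n : ℝ) - pw) with hl1
  set l2 := ((n : ℝ) - pj) * ((n : ℝ) - pj + 2) / (((n : ℝ) - pw) * ((n : ℝ) - pw + 2)) with hl2
  set l3 := ((n : ℝ) - pj) * ((n : ℝ) - pj + 2) * ((n : ℝ) - pj + 4)
      / (((n : ℝ) - pw) * ((n : ℝ) - pw + 2) * ((n : ℝ) - pw + 4)) with hl3
  constructor
  · have hR : M.R1Hat = fun y => -M.gam
        + (M.gam * (1 + pj / n) * l1) * (M.sigHatw2 y / M.sigHat2 y) ^ 1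
        + (-M.gam * (pj + 2) / n * l2) * (M.sigHatw2 y / M.sigHat2 y) ^ 2
        + (2 * M.gam / n * l3) * (M.sigHatw2 y / M.sigHat2 y) ^ 3 := by
      funext y
      simp only [R1Hat, lamHat, lamHat2, lamHat3, ← hl1, ← hl2, ← hl3]
      ring
    rw [hR, hcubic]
    simp only [mul_assoc, e1, e2, e3]
    field_simp
    ring
  · have hR : M.R2Hat = fun y => -M.gam * (pj + 2) / n
        + 0 * (M.sigHatw2 y / M.sigHat2 y) ^ 1
        + (M.gam * (pj + 4) / n * l2) * (M.sigHatw2 y / M.sigHat2 y) ^ 2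
        + (-2 * M.gam / n * l3) * (M.sigHatw2 y / M.sigHat2 y) ^ 3 := by
      funext y
      simp only [R2Hat, lamHat2, lamHat3, ← hl2, ← hl3]
      ring
    rw [hR, hcubic]
    simp only [mul_assoc, e2, e3]
    field_simp
    ring

end
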